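/- arXiv:2011.04279 — 2 statements merged into one kernel-verified Lean document; each statement's English description precedes it below -/
import Mathlib

section
/- Let p ∈ (0,1]. Then ∫₀^{∞} ∑_{j=0}^{∞} (p^{2j}·u^{4j}/(j!)²)·(ρⱼ(−p·u²))²·e^{−2√p·u} du = 1/√(2p). Equivalently, the asymptotic variance lim_{t→∞} Var(X_t¹) of the equilibrium state of the directed-chain game equals 1/√(2p). -/
/-!
Write `fⱼ(v) = v ^ (2 j) / j! * ρⱼ(-v ^ 2) * exp (-v)`. These are the Taylor coefficients in `z` of
`exp (-v √(1 - z))`, that is `fⱼ = Pⱼ(v) exp (-v)` for an explicit polynomial `Pⱼ` (`chainPoly`), and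
after the substitution `v = √p u` the claim becomes `∑ⱼ ∫₀^∞ fⱼ(v)² dv = √2 / 2`.

The differential equation of the generating function gives `fⱼ'' = fⱼ - fⱼ₋₁` (`chainPoly_ode`).
Integrating the derivative of the Wronskian `fₐ' f_b - fₐ f_b'` shows that `∫ fₐ f_b` depends only on
`a + b` (`expInt_chainPoly_shift`). Hence `∫ fⱼ² = ∫ f₀ f₂ⱼ`, and one more integration by parts gives
`∫ f₀ f_b = C_b / 2 ^ (2 b + 1)` with `C_b` the Catalan number (`expInt_chainPoly`).

It remains to sum these numbers over even indices. The series `S(x) = ∑ₙ Cₙ / 2 ^ (2 n + 1) x ^ (n + 1)`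
converges absolutely for `|x| = 1`, since its partial sums at `x = 1` telescope, and the Catalan
recursion reads `S² = 2 S - x` (`scaledCatalan_quadratic`). With `S(-1) ≤ 1` this gives `S(1) = 1` and
`S(-1) = 1 - √2`, and the sum over even indices is `(S(1) - S(-1)) / 2 = √2 / 2`. All terms are
nonnegative, so the sum and the integral may be exchanged.
-/

open Real

/-- `ρ₀(x) = 1` and, for `k ≥ 1`,
`ρₖ(x) = 2^{−k}·∑_{j=k}^{2k−1} ((j−1)! / ((2j−2k)!!·(2k−j−1)!))·(−x)^{−j/2}`. -/
noncomputable def rho (k : ℕ) (x : ℝ) : ℝ :=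
  if k = 0 then 1 else
  (2 : ℝ) ^ (-(k : ℝ)) * ∑ j ∈ Finset.Icc k (2 * k - 1),
    ((Nat.factorial (j - 1) : ℝ) /
      ((Nat.doubleFactorial (2 * j - 2 * k) : ℝ) * (Nat.factorial (2 * k - j - 1) : ℝ))) *
      (-x) ^ (-(j : ℝ) / 2)

/-! ### The polynomials `Pⱼ` -/

open Polynomial in
/-- For `j ≥ 1` the polynomial `v ^ (2 * j) / j! * ρⱼ(-v ^ 2)`, reindexed by the power `m = 2 * j - i`
of `v`; for `j = 0` the constant `1`. Equivalently, `chainPoly j` evaluated at `v` and multiplied by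
`exp (-v)` is the coefficient of `z ^ j` in `exp (-v * √(1 - z))`. -/
noncomputable def chainPoly (j : ℕ) : ℝ[X] :=
  if j = 0 then 1 else
  ∑ m ∈ Finset.Icc 1 j, monomial m ((Nat.factorial (2 * j - m - 1) : ℝ) /
    (2 ^ (2 * j - m) * Nat.factorial j * Nat.factorial (j - m) * Nat.factorial (m - 1)))

lemma chainPoly_zero : chainPoly 0 = 1 := by simp [chainPoly]

lemma chainPoly_coeff_of_lt {j m : ℕ} (hj : j ≠ 0) (h : j < m) : (chainPoly j).coeff m = 0 := by
  rw [chainPoly, if_neg hj, Polynomial.finsetSum_coeff]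
  refine Finset.sum_eq_zero fun i hi => ?_
  rw [Finset.mem_Icc] at hi
  rw [Polynomial.coeff_monomial, if_neg (by omega)]

lemma chainPoly_coeff_zero {j : ℕ} (hj : j ≠ 0) : (chainPoly j).coeff 0 = 0 := by
  rw [chainPoly, if_neg hj, Polynomial.finsetSum_coeff]
  refine Finset.sum_eq_zero fun i hi => ?_
  rw [Finset.mem_Icc] at hi
  rw [Polynomial.coeff_monomial, if_neg (by omega)]

/-- Writing `j = m + 1 + k` removes all truncated subtractions from the coefficients. -/
lemma chainPoly_coeff (m k : ℕ) : (chainPoly (m + 1 + k)).coeff (m + 1) =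
    (Nat.factorial (m + 2 * k) : ℝ) / (2 ^ (m + 1 + 2 * k) * Nat.factorial (m + 1 + k) *
      Nat.factorial k * Nat.factorial m) := by
  rw [chainPoly, if_neg (by omega), Polynomial.finsetSum_coeff, Finset.sum_eq_single (m + 1)]
  · rw [Polynomial.coeff_monomial, if_pos rfl]
    rw [show 2 * (m + 1 + k) - (m + 1) - 1 = m + 2 * k by omega,
      show 2 * (m + 1 + k) - (m + 1) = m + 1 + 2 * k by omega,
      show m + 1 + k - (m + 1) = k by omega, show m + 1 - 1 = m by omega]
  · intro i _ hi
    rw [Polynomial.coeff_monomial, if_neg hi]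
  · intro h
    exact absurd (Finset.mem_Icc.2 ⟨by omega, by omega⟩) h

/-- The recursion `Pⱼ₊₁'' - 2 Pⱼ₊₁' = -Pⱼ`: it says that `fⱼ(v) = Pⱼ(v) exp (-v)` satisfies
`fⱼ₊₁'' = fⱼ₊₁ - fⱼ`. -/
lemma chainPoly_ode (j : ℕ) : (chainPoly (j + 1)).derivative.derivative =
    2 * (chainPoly (j + 1)).derivative - chainPoly j := by
  ext m
  rw [Polynomial.coeff_sub, Polynomial.coeff_ofNat_mul, Polynomial.coeff_derivative,
    Polynomial.coeff_derivative, Polynomial.coeff_derivative]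
  rcases Nat.eq_zero_or_pos j with rfl | hj
  · rw [chainPoly_coeff_of_lt (by omega) (by omega : 0 + 1 < m + 1 + 1), chainPoly_zero]
    rcases Nat.eq_zero_or_pos m with rfl | hm
    · have := chainPoly_coeff 0 0
      norm_num at this
      norm_num [this]
    · rw [chainPoly_coeff_of_lt (by omega) (by omega), Polynomial.coeff_one, if_neg (by omega)]
      simp
  · rcases lt_trichotomy j m with h | rfl | h
    · rw [chainPoly_coeff_of_lt (by omega) (by omega), chainPoly_coeff_of_lt (by omega) (by omega),
        chainPoly_coeff_of_lt (by omega) (by omega)]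
      simp
    · obtain ⟨n, rfl⟩ : ∃ n, j = n + 1 := ⟨j - 1, by omega⟩
      have h1 := chainPoly_coeff (n + 1) 0
      have h2 := chainPoly_coeff n 0
      rw [chainPoly_coeff_of_lt (by omega) (by omega)]
      simp only [add_zero, mul_zero] at h1 h2
      rw [h1, h2]
      have := Nat.factorial_ne_zero n
      simp only [Nat.factorial_succ, pow_succ]
      push_cast
      field_simp
      ring
    · obtain ⟨k, rfl⟩ : ∃ k, j = m + 1 + k := ⟨j - m - 1, by omega⟩
      have h1 := chainPoly_coeff (m + 1) k
      have h2 := chainPoly_coeff m (k + 1)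
      rw [show m + 1 + 1 + k = m + 1 + k + 1 by ring] at h1
      rw [show m + 1 + (k + 1) = m + 1 + k + 1 by ring] at h2
      rw [h1, h2]
      rcases m with _ | n
      · rw [chainPoly_coeff_zero (by omega)]
        simp only [Nat.factorial_succ, pow_succ, mul_add, ← add_assoc, mul_one, zero_add,
          show 0 + 1 + 2 * k = 2 * k + 1 by ring,
          show 1 + k = k + 1 by ring]
        push_cast
        field_simp
        ring
      · have h3 := chainPoly_coeff n (k + 1)
        rw [show n + 1 + (k + 1) = n + 1 + 1 + k by ring] at h3
        rw [h3]
        rw [show n + 1 + 2 * (k + 1) = n + 2 * k + 1 + 1 + 1 by ring,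
          show n + 1 + 1 + 2 * k = n + 2 * k + 1 + 1 by ring,
          show n + 1 + 1 + 2 * (k + 1) = n + 2 * k + 1 + 1 + 1 + 1 by ring,
          show n + 2 * (k + 1) = n + 2 * k + 1 + 1 by ring,
          show n + 1 + 1 + 1 + 2 * k = n + 2 * k + 1 + 1 + 1 by ring]
        simp only [Nat.factorial_succ, pow_succ]
        push_cast
        field_simp
        ring

/-- The substitution turning the weighted `ρⱼ` of the statement into a polynomial. -/
lemma rho_eq_chainPoly (j : ℕ) {v : ℝ} (hv : 0 < v) :
    v ^ (2 * j) / Nat.factorial j * rho j (-(v ^ 2)) = (chainPoly j).eval v := by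
  rcases Nat.eq_zero_or_pos j with rfl | hj
  · simp [rho, chainPoly_zero]
  rw [rho, chainPoly, if_neg hj.ne', if_neg hj.ne', Polynomial.eval_finsetSum, Finset.mul_sum,
    Finset.mul_sum]
  refine Finset.sum_nbij' (fun i => 2 * j - i) (fun m => 2 * j - m) ?_ ?_ ?_ ?_ ?_
  · intro i hi; rw [Finset.mem_Icc] at *; omega
  · intro i hi; rw [Finset.mem_Icc] at *; omega
  · intro i hi; rw [Finset.mem_Icc] at hi; omega
  · intro i hi; rw [Finset.mem_Icc] at hi; omega
  · intro i hi
    rw [Finset.mem_Icc] at hi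
    obtain ⟨m, hm⟩ : ∃ m, 2 * j = i + (m + 1) := ⟨2 * j - i - 1, by omega⟩
    obtain ⟨k, rfl⟩ : ∃ k, i = j + k := ⟨i - j, by omega⟩
    obtain rfl : j = k + m + 1 := by omega
    have hpow : (- -(v ^ 2)) ^ (-((k + m + 1 + k : ℕ) : ℝ) / 2) = (v ^ (k + m + 1 + k))⁻¹ := by
      rw [neg_neg, ← Real.rpow_natCast v 2, ← Real.rpow_mul hv.le, ← Real.rpow_natCast,
        ← Real.rpow_neg hv.le]
      congr 1
      push_cast
      ring
    rw [hpow, Polynomial.eval_monomial,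
      show 2 * (k + m + 1 + k) - 2 * (k + m + 1) = 2 * k by omega, Nat.doubleFactorial_two_mul,
      show 2 * (k + m + 1) - (k + m + 1 + k) - 1 = m by omega,
      show 2 * (k + m + 1) - (2 * (k + m + 1) - (k + m + 1 + k)) = k + m + 1 + k by omega,
      show 2 * (k + m + 1) - (k + m + 1 + k) = m + 1 by omega,
      show k + m + 1 - (m + 1) = k by omega, Real.rpow_neg (by norm_num), Real.rpow_natCast]
    push_cast
    have := hv.ne'
    field_simp
    ring

/-! ### Integrals of polynomials against `exp (-2 v)` -/

/-- The linear functional `Q ↦ ∫₀^∞ Q(v) exp (-2 v) dv`. -/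
noncomputable def expInt (Q : Polynomial ℝ) : ℝ :=
  ∫ v in Set.Ioi (0 : ℝ), Q.eval v * exp (-2 * v)

lemma integrableOn_poly_exp (Q : Polynomial ℝ) :
    MeasureTheory.IntegrableOn (fun v : ℝ => Q.eval v * exp (-2 * v)) (Set.Ioi 0) := by
  induction Q using Polynomial.induction_on' with
  | add p q hp hq =>
    simp only [Polynomial.eval_add, add_mul]
    exact hp.add hq
  | monomial n a =>
    simp only [Polynomial.eval_monomial, mul_assoc]
    refine MeasureTheory.Integrable.const_mul ?_ a
    have h := integrableOn_rpow_mul_exp_neg_mul_rpow (p := 1) (s := n) (b := 2)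
      (by have : (0 : ℝ) ≤ n := n.cast_nonneg
          linarith) one_pos (by norm_num)
    simpa [MeasureTheory.IntegrableOn] using h

lemma expInt_add (Q R : Polynomial ℝ) : expInt (Q + R) = expInt Q + expInt R := by
  simp only [expInt, Polynomial.eval_add, add_mul]
  exact MeasureTheory.integral_add (integrableOn_poly_exp Q) (integrableOn_poly_exp R)

lemma expInt_neg (Q : Polynomial ℝ) : expInt (-Q) = -expInt Q := by
  simp only [expInt, Polynomial.eval_neg, neg_mul]
  exact MeasureTheory.integral_neg _

lemma tendsto_poly_exp (Q : Polynomial ℝ) :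
    Filter.Tendsto (fun v : ℝ => Q.eval v * exp (-2 * v)) Filter.atTop (nhds 0) := by
  induction Q using Polynomial.induction_on' with
  | add p q hp hq =>
    simp only [Polynomial.eval_add, add_mul]
    simpa using hp.add hq
  | monomial n a =>
    simp only [Polynomial.eval_monomial, mul_assoc]
    have h := tendsto_rpow_mul_exp_neg_mul_atTop_nhds_zero n 2 (by norm_num)
    simpa using h.const_mul a

lemma expInt_derivative_sub (Q : Polynomial ℝ) :
    expInt (Q.derivative - 2 * Q) = -Q.coeff 0 := by
  have h := MeasureTheory.integral_Ioi_of_hasDerivAt_of_tendsto' (a := 0)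
    (f := fun v : ℝ => Q.eval v * exp (-2 * v))
    (f' := fun v : ℝ => (Q.derivative - 2 * Q).eval v * exp (-2 * v)) (m := 0)
    (fun x _ => by
      have h1 : HasDerivAt (fun v : ℝ => exp (-2 * v)) (exp (-2 * x) * (-2 * 1)) x :=
        ((hasDerivAt_id x).const_mul (-2)).exp
      refine ((Q.hasDerivAt x).mul h1).congr_deriv ?_
      rw [Polynomial.eval_sub, Polynomial.eval_mul, Polynomial.eval_ofNat]
      ring)
    (integrableOn_poly_exp _) (tendsto_poly_exp Q)
  rw [expInt, h]
  simp [Polynomial.coeff_zero_eq_eval_zero]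

/-- Integrating the derivative of the Wronskian of `fₐ₊₁` and `f_{b+1}`, whose boundary terms
vanish, shows that the Gram matrix of the `fⱼ` is a Hankel matrix. -/
lemma expInt_chainPoly_shift (a b : ℕ) :
    expInt (chainPoly (a + 1) * chainPoly b) = expInt (chainPoly a * chainPoly (b + 1)) := by
  have h := expInt_derivative_sub ((chainPoly (a + 1)).derivative * chainPoly (b + 1) -
    chainPoly (a + 1) * (chainPoly (b + 1)).derivative)
  have e : Polynomial.derivative ((chainPoly (a + 1)).derivative * chainPoly (b + 1) -
      chainPoly (a + 1) * (chainPoly (b + 1)).derivative) -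
      2 * ((chainPoly (a + 1)).derivative * chainPoly (b + 1) -
        chainPoly (a + 1) * (chainPoly (b + 1)).derivative) =
      chainPoly (a + 1) * chainPoly b + -(chainPoly a * chainPoly (b + 1)) := by
    rw [Polynomial.derivative_sub, Polynomial.derivative_mul, Polynomial.derivative_mul,
      chainPoly_ode, chainPoly_ode]
    ring
  rw [e, expInt_add, expInt_neg, Polynomial.coeff_sub, Polynomial.mul_coeff_zero,
    Polynomial.mul_coeff_zero, chainPoly_coeff_zero (by omega), chainPoly_coeff_zero (by omega)] at h
  linarith

lemma expInt_chainPoly_mul (a b : ℕ) :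
    expInt (chainPoly a * chainPoly b) = expInt (chainPoly (a + b)) := by
  induction a generalizing b with
  | zero => rw [chainPoly_zero, one_mul, zero_add]
  | succ a ih => rw [expInt_chainPoly_shift, ih, show a + (b + 1) = a + 1 + b by ring]

/-- The numbers `Cₙ / 2 ^ (2 n + 1)`, with `Cₙ` the Catalan numbers; they are the coefficients of
`x ^ (n + 1)` in `1 - √(1 - x)`. -/
noncomputable def scaledCatalan (n : ℕ) : ℝ := (catalan n : ℝ) / 2 ^ (2 * n + 1)

lemma catalan_cast (n : ℕ) : (catalan n : ℝ) = Nat.centralBinom n / (n + 1) := by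
  rw [eq_div_iff (by positivity), mul_comm]
  exact_mod_cast succ_mul_catalan_eq_centralBinom n

/-- By the recursion, `P_b exp (-2 v)` is the derivative of `-P_(b+1)' exp (-2 v)`, so only the linear
coefficient of `P_(b+1)` contributes. -/
lemma expInt_chainPoly (b : ℕ) : expInt (chainPoly b) = scaledCatalan b := by
  have h := expInt_derivative_sub (chainPoly (b + 1)).derivative
  rw [chainPoly_ode, sub_sub_cancel_left, expInt_neg, Polynomial.coeff_derivative] at h
  have h1 := chainPoly_coeff 0 b
  rw [show 0 + 1 + b = b + 1 by ring] at h1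
  rw [h1] at h
  have h2 := Nat.centralBinom_eq_two_mul_choose b
  have h3 : (Nat.centralBinom b : ℝ) = Nat.factorial (2 * b) / (Nat.factorial b * Nat.factorial b) := by
    rw [h2, Nat.cast_choose ℝ (by omega), show 2 * b - b = b by omega]
  rw [scaledCatalan, catalan_cast, h3]
  rw [neg_inj] at h
  rw [h, Nat.factorial_succ]
  push_cast
  field_simp
  simp
  ring

/-! ### The series of scaled Catalan numbers -/

lemma scaledCatalan_nonneg (n : ℕ) : 0 ≤ scaledCatalan n := by
  unfold scaledCatalan; positivity

lemma sum_scaledCatalan (n : ℕ) :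
    ∑ b ∈ Finset.range n, scaledCatalan b = 1 - Nat.centralBinom n / 4 ^ n := by
  induction n with
  | zero => simp
  | succ n ih =>
    have h : ((n : ℝ) + 1) * Nat.centralBinom (n + 1) = 2 * (2 * n + 1) * Nat.centralBinom n := by
      exact_mod_cast Nat.succ_mul_centralBinom_succ n
    have h' : (Nat.centralBinom (n + 1) : ℝ) = 2 * (2 * n + 1) * Nat.centralBinom n / (n + 1) := by
      rw [eq_div_iff (by positivity), ← h]; ring
    rw [Finset.sum_range_succ, ih, h', scaledCatalan, catalan_cast, pow_succ, pow_mul]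
    norm_num
    field_simp
    ring

lemma sum_scaledCatalan_le (n : ℕ) : ∑ b ∈ Finset.range n, scaledCatalan b ≤ 1 := by
  rw [sum_scaledCatalan]
  have : (0 : ℝ) ≤ Nat.centralBinom n / 4 ^ n := by positivity
  linarith

lemma summable_scaledCatalan : Summable scaledCatalan :=
  summable_of_sum_range_le scaledCatalan_nonneg sum_scaledCatalan_le

lemma tsum_scaledCatalan_le : ∑' n, scaledCatalan n ≤ 1 :=
  summable_scaledCatalan.tsum_le_of_sum_range_le sum_scaledCatalan_le

lemma summable_scaledCatalan_mul {x : ℝ} (hx : |x| = 1) :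
    Summable fun n => ‖scaledCatalan n * x ^ (n + 1)‖ := by
  simpa [norm_mul, hx, abs_of_nonneg (scaledCatalan_nonneg _)] using summable_scaledCatalan

/-- The quadratic equation `S² = 2 S - x` for `S = 1 - √(1 - x)`, obtained for `x = ±1` from the
Catalan recursion by a Cauchy product. -/
lemma scaledCatalan_quadratic {x : ℝ} (hx : |x| = 1) :
    (∑' n, scaledCatalan n * x ^ (n + 1)) ^ 2 = 2 * (∑' n, scaledCatalan n * x ^ (n + 1)) - x := by
  have hs := summable_scaledCatalan_mul hx
  rw [sq, tsum_mul_tsum_eq_tsum_sum_antidiagonal_of_summable_norm hs hs]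
  conv_rhs => rw [hs.of_norm.tsum_eq_zero_add]
  have h : ∀ n, ∑ kl ∈ Finset.HasAntidiagonal.antidiagonal n, scaledCatalan kl.1 * x ^ (kl.1 + 1) *
      (scaledCatalan kl.2 * x ^ (kl.2 + 1)) = 2 * (scaledCatalan (n + 1) * x ^ (n + 1 + 1)) := by
    intro n
    simp only [scaledCatalan]
    rw [catalan_succ']
    push_cast
    rw [Finset.sum_div, Finset.sum_mul, Finset.mul_sum]
    refine Finset.sum_congr rfl fun kl hkl => ?_
    rw [Finset.HasAntidiagonal.mem_antidiagonal] at hkl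
    rw [← hkl]
    field_simp
    ring
  simp only [h]
  rw [tsum_mul_left]
  simp [scaledCatalan]
  ring

lemma hasSum_scaledCatalan_even : HasSum (fun j => scaledCatalan (2 * j)) (√2 / 2) := by
  have hs1 := summable_scaledCatalan_mul (x := 1) (by simp)
  have hs2 := summable_scaledCatalan_mul (x := -1) (by simp)
  have q1 := scaledCatalan_quadratic (x := 1) (by simp)
  have q2 := scaledCatalan_quadratic (x := -1) (by simp)
  set A := ∑' n, scaledCatalan n * (1 : ℝ) ^ (n + 1) with hA
  set B := ∑' n, scaledCatalan n * (-1 : ℝ) ^ (n + 1) with hB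
  have hA1 : A = 1 := by nlinarith [sq_nonneg (A - 1)]
  have hBA : B ≤ 1 := by
    refine le_trans (hs2.of_norm.tsum_le_tsum (fun n => ?_) summable_scaledCatalan)
      tsum_scaledCatalan_le
    refine (le_abs_self _).trans ?_
    simp [abs_mul, abs_of_nonneg (scaledCatalan_nonneg _)]
  -- The quadratic at `x = -1` has the roots `1 ± √2`; the bound `B ≤ 1` selects the smaller one.
  have hB1 : 1 - B = √2 := by
    rw [eq_comm, Real.sqrt_eq_iff_mul_self_eq (by norm_num) (by linarith)]
    nlinarith
  have hsum : Summable fun j => scaledCatalan (2 * j) :=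
    summable_scaledCatalan.comp_injective fun a b h => by simpa using h
  have hsum' : Summable fun j => scaledCatalan (2 * j + 1) :=
    summable_scaledCatalan.comp_injective fun a b h => by simpa using h
  have eA : ∑' j, scaledCatalan (2 * j) + ∑' j, scaledCatalan (2 * j + 1) = A := by
    rw [hA]; simpa using tsum_even_add_odd hsum hsum'
  have eB : -∑' j, scaledCatalan (2 * j) + ∑' j, scaledCatalan (2 * j + 1) = B := by
    rw [hB, ← tsum_even_add_odd (f := fun n => scaledCatalan n * (-1 : ℝ) ^ (n + 1))]
    · simp [pow_succ, pow_mul, tsum_neg]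
    · simpa [pow_succ, pow_mul] using hsum.neg
    · simpa [pow_succ, pow_mul] using hsum'
  have : ∑' j, scaledCatalan (2 * j) = √2 / 2 := by linarith
  rw [← this]
  exact hsum.hasSum

/-! ### The integral -/

lemma integral_tsum_chainPoly :
    ∫ v in Set.Ioi (0:ℝ), (∑' j, ((chainPoly j).eval v) ^ 2) * exp (-2 * v) = √2 / 2 := by
  have hI : ∀ j, ∫ v in Set.Ioi (0:ℝ), (chainPoly j * chainPoly j).eval v * exp (-2 * v) =
      scaledCatalan (2 * j) := fun j => by
    rw [← expInt, expInt_chainPoly_mul, expInt_chainPoly, two_mul]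
  have h := MeasureTheory.hasSum_integral_of_summable_integral_norm
    (μ := MeasureTheory.volume.restrict (Set.Ioi (0:ℝ)))
    (F := fun j v => (chainPoly j * chainPoly j).eval v * exp (-2 * v))
    (fun j => integrableOn_poly_exp _) (by
      have : ∀ j (v : ℝ), ‖(chainPoly j * chainPoly j).eval v * exp (-2 * v)‖ =
          (chainPoly j * chainPoly j).eval v * exp (-2 * v) := fun j v => by
        rw [Real.norm_of_nonneg]
        rw [Polynomial.eval_mul]
        exact mul_nonneg (mul_self_nonneg _) (exp_pos _).le
      simp only [this, hI]
      exact hasSum_scaledCatalan_even.summable)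
  simp only [hI] at h
  rw [← hasSum_scaledCatalan_even.unique h |>.symm]
  refine MeasureTheory.integral_congr_ae (Filter.Eventually.of_forall fun v => ?_)
  simp only [Polynomial.eval_mul, sq]
  rw [tsum_mul_right]

/-- The asymptotic variance of the equilibrium state of the directed-chain game:
`∫₀^∞ ∑ⱼ (p^{2j}·u^{4j}/(j!)²)·(ρⱼ(−p·u²))²·e^{−2√p·u} du = 1/√(2p)`. -/
theorem stmt_14 (p : ℝ) (hp : p ∈ Set.Ioc (0:ℝ) 1) :
    ∫ u in Set.Ioi (0:ℝ),
        (∑' j : ℕ, (p ^ (2 * j) * u ^ (4 * j) / ((Nat.factorial j : ℝ)) ^ 2) *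
          (rho j (-(p * u ^ 2))) ^ 2) * exp (-2 * Real.sqrt p * u) =
      1 / Real.sqrt (2 * p) := by
  have hp0 : 0 < p := hp.1
  have hs : 0 < √p := Real.sqrt_pos.2 hp0
  have hsq : √p ^ 2 = p := Real.sq_sqrt hp0.le
  have key : ∀ u ∈ Set.Ioi (0:ℝ),
      (∑' j : ℕ, (p ^ (2 * j) * u ^ (4 * j) / ((Nat.factorial j : ℝ)) ^ 2) *
          (rho j (-(p * u ^ 2))) ^ 2) * exp (-2 * Real.sqrt p * u) =
      (fun v => (∑' j, ((chainPoly j).eval v) ^ 2) * exp (-2 * v)) (√p * u) := by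
    intro u hu
    have hu' : 0 < √p * u := mul_pos hs hu
    simp only [← mul_assoc]
    congr 1
    refine tsum_congr fun j => ?_
    rw [← rho_eq_chainPoly j hu', mul_pow (√p) u 2, hsq, mul_pow (_ / _), div_pow]
    have hpj : p ^ (2 * j) = √p ^ (4 * j) := by
      rw [show 4 * j = 2 * (2 * j) by ring, pow_mul (√p), hsq]
    rw [hpj]
    congr 2
    ring
  rw [MeasureTheory.setIntegral_congr_fun measurableSet_Ioi key,
    MeasureTheory.integral_comp_mul_left_Ioi (fun v => (∑' j, ((chainPoly j).eval v) ^ 2) * exp (-2 * v))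
      0 hs, mul_zero, integral_tsum_chainPoly, Real.sqrt_mul (by norm_num), smul_eq_mul]
  have h2 : √2 ^ 2 = (2:ℝ) := Real.sq_sqrt (by norm_num)
  field_simp
  linarith
end

section
/- Let p ∈ (0,1], set q₀ = −1, q₁ = 1/2 and qₖ = (2k−3)! / ((k−2)!·k!·2^{2k−2}) for k ≥ 2, and for m ∈ ℕ and t > 0 define g_m(t) = (p^m·t^{2m}/m!)·ρ_m(−p·t²)·e^{−√p·t} (so that g₀(t) = e^{−√p·t}). Then for every m ∈ ℕ and every t > 0, g_m'(t) = √p·∑_{j=0}^{m} qⱼ·g_{m−j}(t), and lim_{t→0⁺} g_m(t) = 1 if m = 0 and = 0 if m ≥ 1. -/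
/-!
After the substitution `s = √p·t > 0`, the function `g m` is `e^{-s}·P_m(s)` with the polynomial
`P_m(s) = ∑ᵢ c(i,m) sⁱ/i!`, where `c(i,m) = i·(2m-i-1)! / (m!·(m-i)!·2^{2m-i})`. The number `c(i,m)` is
the coefficient of `z^m` in `C(z)^i`, where `C(z) = 1 - √(1-z) = ∑_{k≥1} q_k z^k`; thus
`∑ₘ P_m(s) z^m = exp(s·C(z))` and differentiating in `s` multiplies this generating function by `C`.
Together with the factor `e^{-s}`, which accounts for `q₀ = -1`, this is the Kolmogorov equation.

The point to prove is therefore the convolution identity `c(i+1,m) = ∑_{j+k=m} c(1,j)·c(i,k)`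
(`powCoeff_succ`). The series `D_i = ∑ₘ c(i,m) z^m` satisfy `D_{i+2} = 2·D_{i+1} - z·D_i`
(`powCoeff_rec`), reflecting `C² = 2C - z`. The defect `E_i = D_{i+1} - D_1·D_i` satisfies the same
recurrence, has `E_0 = 0`, and is divisible by `z^i`. Comparing coefficients of `z^n` in
`2·E_{i+1} = E_{i+2} + z·E_i`, by induction on `n` and downward induction on `i`, gives `E_i = 0`.
-/


open Real Filter

/-- The row entries of the Catalan generator: `q₀ = −1`, `q₁ = 1/2` and
`qₖ = (2k−3)! / ((k−2)!·k!·2^{2k−2})` for `k ≥ 2`. -/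
noncomputable def qCoeff : ℕ → ℝ := fun k =>
  if k = 0 then -1
  else if k = 1 then 1 / 2
  else (Nat.factorial (2 * k - 3) : ℝ) /
    ((Nat.factorial (k - 2) : ℝ) * (Nat.factorial k : ℝ) * 2 ^ (2 * k - 2))

/-- The closed form of the coefficient of `z^m` in `(1 - √(1-z))^i`. The value at `m = 0` is given
separately, because the factorial formula (with truncated subtraction) would give `0` at
`i = m = 0`. -/
noncomputable def powCoeff (i m : ℕ) : ℝ :=
  if m = 0 then (if i = 0 then 1 else 0)
  else if m < i then 0
  else (i : ℝ) * (Nat.factorial (2 * m - i - 1) : ℝ) /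
    ((Nat.factorial m : ℝ) * (Nat.factorial (m - i) : ℝ) * 2 ^ (2 * m - i))

lemma powCoeff_of_lt {i m : ℕ} (h : m < i) : powCoeff i m = 0 := by
  unfold powCoeff
  split_ifs <;> first | rfl | omega

lemma powCoeff_zero_zero : powCoeff 0 0 = 1 := by simp [powCoeff]

lemma powCoeff_zero_succ (m : ℕ) : powCoeff 0 (m + 1) = 0 := by simp [powCoeff]

lemma powCoeff_succ_add (i d : ℕ) : powCoeff (i + 1) (i + 1 + d) =
    ((i : ℝ) + 1) * (Nat.factorial (i + 2 * d) : ℝ) /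
    ((Nat.factorial (i + 1 + d) : ℝ) * (Nat.factorial d : ℝ) * 2 ^ (i + 1 + 2 * d)) := by
  unfold powCoeff
  rw [if_neg (by omega), if_neg (by omega),
    show 2 * (i + 1 + d) - (i + 1) - 1 = i + 2 * d by omega,
    show i + 1 + d - (i + 1) = d by omega,
    show 2 * (i + 1 + d) - (i + 1) = i + 1 + 2 * d by omega]
  push_cast
  rfl

lemma powCoeff_add_succ (i d : ℕ) : powCoeff i (i + (d + 1)) =
    (i : ℝ) * (Nat.factorial (i + 2 * d + 1) : ℝ) /
    ((Nat.factorial (i + 1 + d) : ℝ) * (Nat.factorial (d + 1) : ℝ) * 2 ^ (i + 2 + 2 * d)) := by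
  unfold powCoeff
  rw [if_neg (by omega), if_neg (by omega),
    show 2 * (i + (d + 1)) - i - 1 = i + 2 * d + 1 by omega,
    show i + (d + 1) - i = d + 1 by omega,
    show 2 * (i + (d + 1)) - i = i + 2 + 2 * d by omega,
    show i + (d + 1) = i + 1 + d by omega]

lemma powCoeff_self (i : ℕ) : powCoeff i i = 1 / 2 ^ i := by
  cases i with
  | zero => simp [powCoeff_zero_zero]
  | succ i =>
    have h := powCoeff_succ_add i 0
    simp only [add_zero, mul_zero] at h
    rw [h, Nat.factorial_succ]
    have := Nat.factorial_ne_zero i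
    push_cast
    field_simp
    simp

/-- The relation `C^{i+2} = 2·C^{i+1} - z·C^i`, coefficientwise. -/
lemma powCoeff_rec (i m : ℕ) :
    powCoeff (i + 2) (m + 1) = 2 * powCoeff (i + 1) (m + 1) - powCoeff i m := by
  rcases lt_trichotomy m i with h | rfl | h
  · rw [powCoeff_of_lt h, powCoeff_of_lt (by omega), powCoeff_of_lt (by omega)]
    simp
  · rw [powCoeff_of_lt (by omega), powCoeff_self, powCoeff_self, pow_succ]
    field_simp
    ring
  · obtain ⟨d, rfl⟩ : ∃ d, m = i + (d + 1) := ⟨m - i - 1, by omega⟩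
    rw [powCoeff_add_succ]
    have h1 := powCoeff_succ_add (i + 1) d
    have h2 := powCoeff_succ_add i (d + 1)
    rw [show i + (d + 1) + 1 = i + 1 + 1 + d by omega, h1,
      show i + 1 + 1 + d = i + 1 + (d + 1) by omega, h2,
      show i + 1 + (d + 1) = (i + 1 + d) + 1 by omega,
      show i + 1 + 2 * d = i + 2 * d + 1 by omega,
      show i + 2 * (d + 1) = (i + 2 * d + 1) + 1 by omega,
      show i + 1 + 1 + 2 * d = i + 2 + 2 * d by omega,
      show i + 1 + 2 * (d + 1) = i + 2 + 2 * d + 1 by omega,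
      Nat.factorial_succ (i + 1 + d), Nat.factorial_succ (i + 2 * d + 1), Nat.factorial_succ d,
      pow_succ]
    have e1 := Nat.factorial_ne_zero (i + 1 + d)
    have e2 := Nat.factorial_ne_zero d
    have e3 := Nat.factorial_ne_zero (i + 2 * d + 1)
    have e4 : ((i : ℝ) + 1 + d + 1) ≠ 0 := by positivity
    push_cast
    field_simp
    ring

/-- The generating series of `powCoeff i`. -/
noncomputable def powSeries (i : ℕ) : PowerSeries ℝ := PowerSeries.mk (powCoeff i)

lemma powSeries_zero : powSeries 0 = 1 := by
  ext n
  cases n <;> simp [powSeries, powCoeff_zero_zero, powCoeff_zero_succ, PowerSeries.coeff_one]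

lemma powSeries_rec (i : ℕ) :
    powSeries (i + 2) = 2 * powSeries (i + 1) - PowerSeries.X * powSeries i := by
  ext n
  rw [two_mul, map_sub, map_add]
  cases n with
  | zero => simp [powSeries, powCoeff]
  | succ n =>
    rw [PowerSeries.coeff_succ_X_mul]
    simp only [powSeries, PowerSeries.coeff_mk, powCoeff_rec]
    ring

/-- The failure of `powSeries` to be multiplicative vanishes below degree `i`. -/
lemma coeff_defect_of_lt {i n : ℕ} (h : n < i) :
    PowerSeries.coeff n (powSeries (i + 1) - powSeries 1 * powSeries i) = 0 := by
  rw [map_sub, PowerSeries.coeff_mul]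
  simp only [powSeries, PowerSeries.coeff_mk]
  rw [powCoeff_of_lt (by omega), Finset.sum_eq_zero, sub_zero]
  intro x hx
  rw [Finset.HasAntidiagonal.mem_antidiagonal] at hx
  rw [powCoeff_of_lt (i := i) (m := x.2) (by omega), mul_zero]

lemma powSeries_succ (i : ℕ) : powSeries (i + 1) = powSeries 1 * powSeries i := by
  set E : ℕ → PowerSeries ℝ := fun i => powSeries (i + 1) - powSeries 1 * powSeries i with hE
  have hrec (i : ℕ) : E (i + 1) + E (i + 1) = E (i + 2) + PowerSeries.X * E i := by
    simp only [hE]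
    rw [powSeries_rec (i + 1), powSeries_rec i]
    ring
  have h0 : E 0 = 0 := by simp [hE, powSeries_zero]
  have key : ∀ n i, PowerSeries.coeff n (E i) = 0 := by
    intro n
    induction n with
    | zero =>
      -- Downward induction on `i`: `k` is the distance to the range `i > n` of trivial vanishing.
      have : ∀ k i, 0 < i + k → PowerSeries.coeff 0 (E i) = 0 := by
        intro k
        induction k with
        | zero => exact fun i hi => coeff_defect_of_lt hi
        | succ k ih =>
          intro i _
          rcases i with _ | i
          · rw [h0, map_zero]
          · have := congrArg (PowerSeries.coeff 0) (hrec i)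
            rw [map_add, map_add, PowerSeries.coeff_zero_X_mul, ih (i + 2) (by omega)] at this
            linarith
      exact fun i => this 1 i (by omega)
    | succ n ihn =>
      have : ∀ k i, n + 1 < i + k → PowerSeries.coeff (n + 1) (E i) = 0 := by
        intro k
        induction k with
        | zero => exact fun i hi => coeff_defect_of_lt hi
        | succ k ih =>
          intro i _
          rcases i with _ | i
          · rw [h0, map_zero]
          · have := congrArg (PowerSeries.coeff (n + 1)) (hrec i)
            rw [map_add, map_add, PowerSeries.coeff_succ_X_mul, ih (i + 2) (by omega), ihn] at this
            linarith
      exact fun i => this (n + 2) i (by omega)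
  have : E i = 0 := by
    ext n
    rw [key, map_zero]
  exact sub_eq_zero.mp this

lemma powCoeff_succ (i m : ℕ) : powCoeff (i + 1) m =
    ∑ j ∈ Finset.range (m + 1), powCoeff 1 j * powCoeff i (m - j) := by
  have h := congrArg (PowerSeries.coeff m) (powSeries_succ i)
  rw [PowerSeries.coeff_mul, Finset.Nat.sum_antidiagonal_eq_sum_range_succ_mk] at h
  simpa [powSeries] using h

lemma qCoeff_eq (j : ℕ) : qCoeff j = powCoeff 1 j - if j = 0 then 1 else 0 := by
  rcases j with _ | _ | j
  · simp [qCoeff, powCoeff]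
  · simp [qCoeff, powCoeff_self]
  · have h := powCoeff_succ_add 0 (j + 1)
    rw [show 0 + 1 + (j + 1) = j + 1 + 1 by omega] at h
    rw [show powCoeff 1 (j + 1 + 1) = _ from h, qCoeff, if_neg (by omega), if_neg (by omega), if_neg (by omega),
      show 2 * (j + 1 + 1) - 3 = 2 * j + 1 by omega, show j + 1 + 1 - 2 = j by omega,
      show 2 * (j + 1 + 1) - 2 = 2 * j + 2 by omega, show 0 + 2 * (j + 1) = 2 * j + 1 + 1 by omega,
      show 0 + 1 + 2 * (j + 1) = 2 * j + 2 + 1 by omega,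
      Nat.factorial_succ (2 * j + 1), Nat.factorial_succ j, pow_succ _ (2 * j + 2)]
    have e1 := Nat.factorial_ne_zero (j + 1 + 1)
    have e2 := Nat.factorial_ne_zero j
    push_cast
    field_simp
    ring

/-- The polynomial `P_m(s) = ∑ᵢ c(i,m) sⁱ/i!`, the coefficient of `z^m` in
`exp (s·(1 - √(1-z)))`. -/
noncomputable def expCoeffPoly (m : ℕ) (s : ℝ) : ℝ :=
  ∑ i ∈ Finset.range (m + 1), powCoeff i m * (s ^ i / (Nat.factorial i : ℝ))

lemma expCoeffPoly_eq_of_le {m M : ℕ} (h : m ≤ M) (s : ℝ) : expCoeffPoly m s =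
    ∑ i ∈ Finset.range (M + 1), powCoeff i m * (s ^ i / (Nat.factorial i : ℝ)) := by
  refine Finset.sum_subset (Finset.range_subset_range.mpr (by omega)) fun i _ hi => ?_
  rw [Finset.mem_range] at hi
  rw [powCoeff_of_lt (by omega), zero_mul]

lemma hasDerivAt_expCoeffPoly (m : ℕ) (s : ℝ) : HasDerivAt (expCoeffPoly m)
    (∑ j ∈ Finset.range (m + 1), powCoeff 1 j * expCoeffPoly (m - j) s) s := by
  have h1 : expCoeffPoly m = fun s => (∑ i ∈ Finset.range (m + 1),
      powCoeff (i + 1) m * (s ^ (i + 1) / (Nat.factorial (i + 1) : ℝ))) + powCoeff 0 m := by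
    funext s
    rw [expCoeffPoly_eq_of_le (Nat.le_succ m), Finset.sum_range_succ']
    simp
  have h2 : ∑ j ∈ Finset.range (m + 1), powCoeff 1 j * expCoeffPoly (m - j) s =
      ∑ i ∈ Finset.range (m + 1), powCoeff (i + 1) m * (s ^ i / (Nat.factorial i : ℝ)) := by
    simp_rw [expCoeffPoly_eq_of_le (Nat.sub_le m _), Finset.mul_sum]
    rw [Finset.sum_comm]
    refine Finset.sum_congr rfl fun i _ => ?_
    rw [powCoeff_succ, Finset.sum_mul]
    simp only [mul_assoc]
  rw [h1, h2]
  refine HasDerivAt.add_const _ (HasDerivAt.fun_sum fun i _ => ?_)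
  refine HasDerivAt.const_mul _ ?_
  have h := (hasDerivAt_pow (i + 1) s).div_const (Nat.factorial (i + 1) : ℝ)
  convert h using 1
  rw [Nat.factorial_succ]
  have := Nat.factorial_ne_zero i
  push_cast
  field_simp

/-- The closed form of `ρ_m` is the polynomial `P_m` after reversing the summation,
`j = 2m - i`. -/
lemma rho_eq_expCoeffPoly (m : ℕ) {s : ℝ} (hs : 0 < s) :
    s ^ (2 * m) / (Nat.factorial m : ℝ) * rho m (-(s ^ 2)) = expCoeffPoly m s := by
  rcases m with _ | n
  · simp [rho, expCoeffPoly, powCoeff_zero_zero]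
  · rw [rho, if_neg (by omega), expCoeffPoly, Finset.sum_range_succ', powCoeff_zero_succ, zero_mul,
      add_zero, Finset.mul_sum, Finset.mul_sum]
    symm
    refine Finset.sum_nbij' (fun i => 2 * n + 1 - i) (fun j => 2 * n + 1 - j) ?_ ?_ ?_ ?_ ?_
    · intro i hi
      simp only [Finset.mem_range, Finset.mem_Icc] at *
      omega
    · intro i hi
      simp only [Finset.mem_range, Finset.mem_Icc] at *
      omega
    · intro i hi
      simp only [Finset.mem_range] at *
      omega
    · intro i hi
      simp only [Finset.mem_Icc] at *
      omega
    · intro i hi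
      rw [Finset.mem_range] at hi
      obtain ⟨d, rfl⟩ : ∃ d, n = i + d := ⟨n - i, by omega⟩
      have hpow : (-(-(s ^ 2))) ^ (-((i + 2 * d + 1 : ℕ) : ℝ) / 2) = (s ^ (i + 2 * d + 1))⁻¹ := by
        rw [neg_neg, ← Real.rpow_natCast s 2, ← Real.rpow_mul hs.le, ← Real.rpow_natCast s,
          ← Real.rpow_neg hs.le]
        congr 1
        push_cast
        ring
      have h2 : (2 : ℝ) ^ (-((i + d + 1 : ℕ) : ℝ)) = (2 ^ (i + d + 1))⁻¹ := by
        rw [Real.rpow_neg (by norm_num), Real.rpow_natCast]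
      have hc := powCoeff_succ_add i d
      rw [show i + 1 + d = i + d + 1 by omega] at hc
      rw [show 2 * (i + d) + 1 - i = i + 2 * d + 1 by omega, hpow, h2, hc,
        show i + 2 * d + 1 - 1 = i + 2 * d by omega,
        show 2 * (i + 2 * d + 1) - 2 * (i + d + 1) = 2 * d by omega,
        show 2 * (i + d + 1) - (i + 2 * d + 1) - 1 = i by omega,
        Nat.doubleFactorial_two_mul, Nat.factorial_succ i,
        show 2 * (i + d + 1) = (i + 2 * d + 1) + (i + 1) by omega, pow_add s (i + 2 * d + 1),
        show i + 1 + 2 * d = (i + d + 1) + d by omega, pow_add 2 (i + d + 1)]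
      have e1 := Nat.factorial_ne_zero (i + d + 1)
      have e2 := Nat.factorial_ne_zero d
      have e3 := Nat.factorial_ne_zero i
      push_cast
      field_simp

/-- The functions `g_m(t) = (p^m·t^{2m}/m!)·ρ_m(−p·t²)·e^{−√p·t}` satisfy the
Kolmogorov-type equations `g_m' = √p·∑_{j=0}^{m} qⱼ·g_{m−j}` on `(0,∞)`, with
`g_m(0⁺) = 1` for `m = 0` and `= 0` for `m ≥ 1`. -/
theorem stmt_15 (p : ℝ) (hp : p ∈ Set.Ioc (0:ℝ) 1)
    (g : ℕ → ℝ → ℝ)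
    (hg : ∀ m t, g m t = (p ^ m * t ^ (2 * m) / (Nat.factorial m : ℝ)) *
      rho m (-(p * t ^ 2)) * exp (-Real.sqrt p * t)) :
    (∀ m, ∀ t : ℝ, 0 < t → HasDerivAt (g m)
      (Real.sqrt p * ∑ j ∈ Finset.range (m + 1), qCoeff j * g (m - j) t) t) ∧
    (∀ m, Tendsto (g m) (nhdsWithin 0 (Set.Ioi 0))
      (nhds (if m = 0 then 1 else 0))) := by
  have hp0 : 0 < p := hp.1
  have hsq : Real.sqrt p ^ 2 = p := Real.sq_sqrt hp0.le
  have hg' : ∀ m t, 0 < t →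
      g m t = expCoeffPoly m (Real.sqrt p * t) * exp (-Real.sqrt p * t) := by
    intro m t ht
    have hs : 0 < Real.sqrt p * t := mul_pos (Real.sqrt_pos.mpr hp0) ht
    rw [hg, ← rho_eq_expCoeffPoly m hs, pow_mul (Real.sqrt p * t), mul_pow, hsq, mul_pow,
      ← pow_mul]
  have hmul (t : ℝ) : HasDerivAt (fun t => Real.sqrt p * t) (Real.sqrt p) t := by
    simpa using (hasDerivAt_id t).const_mul (Real.sqrt p)
  have hderiv (m : ℕ) (t : ℝ) :
      HasDerivAt (fun t => expCoeffPoly m (Real.sqrt p * t) * exp (-Real.sqrt p * t))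
        ((∑ j ∈ Finset.range (m + 1), powCoeff 1 j * expCoeffPoly (m - j) (Real.sqrt p * t)) *
          Real.sqrt p * exp (-Real.sqrt p * t) +
          expCoeffPoly m (Real.sqrt p * t) * (exp (-Real.sqrt p * t) * (-Real.sqrt p * 1))) t :=
    ((hasDerivAt_expCoeffPoly m _).comp t (hmul t)).mul
      (((hasDerivAt_id t).const_mul (-Real.sqrt p)).exp)
  refine ⟨fun m t ht => ?_, fun m => ?_⟩
  · have hev : g m =ᶠ[nhds t]
        fun t => expCoeffPoly m (Real.sqrt p * t) * exp (-Real.sqrt p * t) := by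
      filter_upwards [lt_mem_nhds ht] with u hu using hg' m u hu
    refine HasDerivAt.congr_of_eventuallyEq ?_ hev
    refine (hderiv m t).congr_deriv ?_
    symm
    simp_rw [hg' _ t ht, qCoeff_eq, sub_mul, Finset.sum_sub_distrib, ite_mul, one_mul, zero_mul,
      ← mul_assoc, ← Finset.sum_mul]
    rw [Finset.sum_ite_eq' (Finset.range (m + 1)) 0
      (fun j => expCoeffPoly (m - j) (Real.sqrt p * t) * exp (-Real.sqrt p * t))]
    simp
    ring
  · have hcont := (hderiv m 0).continuousAt.tendsto.mono_left
      (nhdsWithin_le_nhds (s := Set.Ioi (0 : ℝ)))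
    have hval : expCoeffPoly m 0 = if m = 0 then 1 else 0 := by
      rw [expCoeffPoly, Finset.sum_range_succ']
      simp [powCoeff]
    simp only [mul_zero, exp_zero, mul_one, hval] at hcont
    refine hcont.congr' ?_
    filter_upwards [self_mem_nhdsWithin] with u hu
    rw [hg' m u hu]
end
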